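/- arXiv:math/0703928 — 2 statements merged into one kernel-verified Lean document; each statement's English description precedes it below -/
import Mathlib

section
/- Let λ ≥ 0, t > 0, and let n be a nonnegative integer with n + λ > 0. Then e^{−nt} = ∫_0^∞ e^{−n(n+2λ)s} φ_t(s) ds, where φ_t(s) = (t / (2√π)) · s^{−3/2} · exp( −( t/(2√s) − λ√s )^2 ) for s > 0. -/
open MeasureTheory Real Set

noncomputable section

/-- the subordination kernel `φ_t(s) = (t/(2√π)) s^{-3/2} exp(-(t/(2√s) - λ√s)²)` -/
def phiKer (lam t s : ℝ) : ℝ :=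
  t / (2 * Real.sqrt π) * s ^ (-(3/2) : ℝ) *
    Real.exp (-(t / (2 * Real.sqrt s) - lam * Real.sqrt s) ^ 2)

/-!
Completing the square, `e^{-m(m+2λ)s} φ_t(s)` is `e^{-mt}` times the kernel with `λ` replaced by
`m + λ`, so the identity says that every kernel with nonnegative parameter has total mass one. The
substitution `x = s^{-1/2}` turns this mass into a Gaussian in `b x - a / x`, and the
Cauchy–Schlömilch transformation reduces that to the ordinary Gaussian integral: for
`x = √(a/b) e^v` one has `b x - a / x = 2√(ab) sinh v`, and when the integrand is even in `v` the
Jacobian `e^v` may be replaced by its even part `cosh v`, the Jacobian of `sinh`.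
-/

section ChangeOfVariables

variable {E : Type*} [NormedAddCommGroup E] [NormedSpace ℝ E]

theorem integral_exp_smul_comp_exp (f : ℝ → E) :
    ∫ v, exp v • f (exp v) = ∫ x in Ioi 0, f x := by
  simpa only [image_univ, range_exp, abs_exp, Measure.restrict_univ] using
    (integral_image_eq_integral_abs_deriv_smul MeasurableSet.univ
      (fun v _ => (hasDerivAt_exp v).hasDerivWithinAt) exp_injective.injOn f).symm

theorem integral_cosh_smul_comp_sinh (f : ℝ → E) :
    ∫ v, cosh v • f (sinh v) = ∫ u, f u := by
  simpa only [image_univ, sinh_surjective.range_eq, abs_of_pos (cosh_pos _),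
      Measure.restrict_univ] using
    (integral_image_eq_integral_abs_deriv_smul MeasurableSet.univ
      (fun v _ => (hasDerivAt_sinh v).hasDerivWithinAt) sinh_injective.injOn f).symm

theorem integrable_cosh_smul_comp_sinh {f : ℝ → E} (hf : Integrable f) :
    Integrable fun v => cosh v • f (sinh v) := by
  have himage := integrableOn_image_iff_integrableOn_abs_deriv_smul MeasurableSet.univ
    (fun v _ => (hasDerivAt_sinh v).hasDerivWithinAt) sinh_injective.injOn f
  simp only [image_univ, sinh_surjective.range_eq, abs_of_pos (cosh_pos _),
    integrableOn_univ] at himage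
  exact himage.1 hf

theorem integrable_exp_smul_of_integrable_cosh_smul {g : ℝ → E}
    (hg : Integrable fun v => cosh v • g v) : Integrable fun v => exp v • g v := by
  have hcont : Continuous fun v => exp v / cosh v :=
    continuous_exp.div continuous_cosh fun v => (cosh_pos v).ne'
  have hbound : ∀ v, ‖exp v / cosh v‖ ≤ 2 := fun v => by
    rw [norm_of_nonneg (div_pos (exp_pos v) (cosh_pos v)).le, div_le_iff₀ (cosh_pos v), cosh_eq]
    linarith [exp_pos (-v)]
  refine (hg.bdd_smul 2 hcont.aestronglyMeasurable (ae_of_all _ hbound)).congr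
    (ae_of_all _ fun v => ?_)
  simp only [Pi.smul_apply', smul_smul, div_mul_cancel₀ _ (cosh_pos v).ne']

theorem integral_exp_smul_of_even {g : ℝ → E} (heven : g.Even)
    (hg : Integrable fun v => cosh v • g v) :
    ∫ v, exp v • g v = ∫ v, cosh v • g v := by
  have hexp := integrable_exp_smul_of_integrable_cosh_smul hg
  have hneg : ∀ v, exp (-v) • g (-v) = (2 : ℝ) • cosh v • g v - exp v • g v := fun v => by
    rw [heven, smul_smul, ← sub_smul, cosh_eq]
    congr 1
    ring
  have hsum : ∫ v, exp v • g v = (2 : ℝ) • (∫ v, cosh v • g v) - ∫ v, exp v • g v := by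
    conv_lhs => rw [← integral_neg_eq_self]
    simp only [hneg]
    rw [integral_sub (hg.fun_smul (2 : ℝ)) hexp, integral_smul]
  have htwo := eq_sub_iff_add_eq.1 hsum
  rw [← two_smul ℝ] at htwo
  exact smul_right_injective E two_ne_zero htwo

theorem integral_eq_two_smul_integral_Ioi_of_even {f : ℝ → E} (heven : f.Even)
    (hf : Integrable f) : ∫ x, f x = (2 : ℝ) • ∫ x in Ioi 0, f x := by
  have hneg : ∫ x in Iic 0, f x = ∫ x in Ioi 0, f x := by
    simpa only [heven _, neg_zero] using (integral_comp_neg_Ioi 0 f).symm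
  rw [← intervalIntegral.integral_Iic_add_Ioi hf.integrableOn hf.integrableOn, hneg, two_smul]

end ChangeOfVariables

section CauchySchlomilch

variable {E : Type*} [NormedAddCommGroup E] [NormedSpace ℝ E] {f : ℝ → E}

theorem integral_comp_sub_inv_Ioi_of_even (heven : f.Even) (hf : Integrable f) :
    ∫ x in Ioi 0, f (x - x⁻¹) = (2 : ℝ)⁻¹ • ∫ u, f u := by
  have hsinh : ∀ v, exp v - (exp v)⁻¹ = 2 * sinh v := fun v => by
    rw [← exp_neg, sinh_eq]
    ring
  have heven' : Function.Even fun v => f (2 * sinh v) := fun v => by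
    simp only [sinh_neg, mul_neg, heven _]
  have hint : Integrable fun v => cosh v • f (2 * sinh v) :=
    integrable_cosh_smul_comp_sinh (hf.comp_mul_left' two_ne_zero)
  calc ∫ x in Ioi 0, f (x - x⁻¹)
      = ∫ v, exp v • f (2 * sinh v) := by
        simp only [← hsinh, ← integral_exp_smul_comp_exp]
    _ = ∫ v, cosh v • f (2 * sinh v) := integral_exp_smul_of_even heven' hint
    _ = ∫ u, f (2 * u) := integral_cosh_smul_comp_sinh fun u => f (2 * u)
    _ = (2 : ℝ)⁻¹ • ∫ u, f u := by
        rw [Measure.integral_comp_mul_left, abs_of_pos (by norm_num)]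

theorem integral_comp_mul_sub_div_Ioi_of_even {a b : ℝ} (ha : 0 ≤ a) (hb : 0 < b)
    (heven : f.Even) (hf : Integrable f) :
    ∫ x in Ioi 0, f (b * x - a / x) = (2 * b)⁻¹ • ∫ u, f u := by
  rcases ha.eq_or_lt with rfl | ha
  · simp only [zero_div, sub_zero]
    rw [integral_comp_mul_left_Ioi f 0 hb, mul_zero,
      integral_eq_two_smul_integral_Ioi_of_even heven hf, smul_smul]
    congr 1
    field_simp
  obtain ⟨k, hk, rfl⟩ : ∃ k, 0 < k ∧ a = b * k ^ 2 :=
    ⟨√(a / b), by positivity, by rw [sq_sqrt (by positivity)]; field_simp⟩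
  have hscale : ∀ x : ℝ, b * (k * x) - b * k ^ 2 / (k * x) = b * k * (x - x⁻¹) := fun x => by
    field_simp
  have heven' : Function.Even fun u => f (b * k * u) := fun u => by
    simp only [mul_neg, heven _]
  calc ∫ x in Ioi 0, f (b * x - b * k ^ 2 / x)
      = k • ∫ x in Ioi 0, f (b * k * (x - x⁻¹)) := by
        simp only [← hscale]
        rw [integral_comp_mul_left_Ioi' (fun x => f (b * x - b * k ^ 2 / x)) 0 hk, mul_zero]
    _ = k • (2 : ℝ)⁻¹ • ∫ u, f (b * k * u) := by
        rw [integral_comp_sub_inv_Ioi_of_even heven' (hf.comp_mul_left' (by positivity))]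
    _ = (2 * b)⁻¹ • ∫ u, f u := by
        rw [Measure.integral_comp_mul_left, abs_of_pos (by positivity), smul_smul, smul_smul]
        congr 1
        field_simp

theorem integral_exp_neg_sq_mul_sub_div_Ioi {a b : ℝ} (ha : 0 ≤ a) (hb : 0 < b) :
    ∫ x in Ioi 0, exp (-(b * x - a / x) ^ 2) = √π / (2 * b) := by
  have heven : Function.Even fun u : ℝ => exp (-u ^ 2) := fun u => by simp only [neg_sq]
  have hint : Integrable fun u : ℝ => exp (-u ^ 2) := by
    simpa using integrable_exp_neg_mul_sq one_pos
  have hgauss : ∫ u : ℝ, exp (-u ^ 2) = √π := by simpa using integral_gaussian 1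
  rw [integral_comp_mul_sub_div_Ioi_of_even ha hb heven hint, hgauss, smul_eq_mul,
    inv_mul_eq_div]

end CauchySchlomilch

section SubordinationKernel

theorem phiKer_eq_rpow_mul (lam t : ℝ) {s : ℝ} (hs : 0 < s) :
    phiKer lam t s = s ^ (-(3 / 2) : ℝ) * (t / (2 * √π) *
      exp (-(t / 2 * s ^ (-(1 / 2) : ℝ) - lam / s ^ (-(1 / 2) : ℝ)) ^ 2)) := by
  have hrpow : s ^ (-(1 / 2) : ℝ) = (√s)⁻¹ := by rw [rpow_neg hs.le, sqrt_eq_rpow]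
  have harg : t / (2 * √s) - lam * √s = t / 2 * (√s)⁻¹ - lam / (√s)⁻¹ := by
    rw [div_inv_eq_mul, ← div_eq_mul_inv, div_div]
  rw [phiKer, hrpow, harg]
  ring

theorem integral_phiKer {lam t : ℝ} (hlam : 0 ≤ lam) (ht : 0 < t) :
    ∫ s in Ioi 0, phiKer lam t s = 1 := by
  have hsubst : ∀ s ∈ Ioi (0 : ℝ), phiKer lam t s =
      (|(-(1 / 2) : ℝ)| * s ^ (-(1 / 2) - 1 : ℝ)) • (t / √π *
        exp (-(t / 2 * s ^ (-(1 / 2) : ℝ) - lam / s ^ (-(1 / 2) : ℝ)) ^ 2)) := fun s hs => by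
    have hexponent : (-(1 / 2) - 1 : ℝ) = -(3 / 2) := by norm_num
    rw [phiKer_eq_rpow_mul lam t hs, hexponent, abs_neg, abs_of_pos one_half_pos, smul_eq_mul]
    ring
  calc ∫ s in Ioi 0, phiKer lam t s
      = ∫ x in Ioi 0, t / √π * exp (-(t / 2 * x - lam / x) ^ 2) := by
        rw [setIntegral_congr_fun measurableSet_Ioi hsubst]
        exact integral_comp_rpow_Ioi (fun x => t / √π * exp (-(t / 2 * x - lam / x) ^ 2))
          (by norm_num)
    _ = t / √π * (√π / (2 * (t / 2))) := by
        rw [integral_const_mul, integral_exp_neg_sq_mul_sub_div_Ioi hlam (half_pos ht)]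
    _ = 1 := by
        have hpi : √π ≠ 0 := (sqrt_pos.2 pi_pos).ne'
        field_simp

theorem exp_mul_phiKer (lam t m : ℝ) {s : ℝ} (hs : 0 < s) :
    exp (-(m * (m + 2 * lam) * s)) * phiKer lam t s = exp (-(m * t)) * phiKer (m + lam) t s := by
  have hsquare : -(m * (m + 2 * lam) * s) + -(t / (2 * √s) - lam * √s) ^ 2 =
      -(m * t) + -(t / (2 * √s) - (m + lam) * √s) ^ 2 := by
    have hcross : t / (2 * √s) * √s = t / 2 := by
      have hsqrt : √s ≠ 0 := (sqrt_pos.2 hs).ne'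
      field_simp
    linear_combination (-2 * m) * hcross + (m * (m + 2 * lam)) * sq_sqrt hs.le
  simp only [phiKer, mul_left_comm (exp _), ← exp_add, hsquare]

end SubordinationKernel

theorem stmt9_general {lam t m : ℝ} (ht : 0 < t) (hm : 0 ≤ m + lam) :
    exp (-(m * t)) =
      ∫ s in Ioi (0 : ℝ), exp (-(m * (m + 2 * lam) * s)) * phiKer lam t s := by
  rw [setIntegral_congr_fun measurableSet_Ioi fun s hs => exp_mul_phiKer lam t m hs,
    integral_const_mul, integral_phiKer hm ht, mul_one]

/-- Subordination identity: `e^{-nt} = ∫₀^∞ e^{-n(n+2λ)s} φ_t(s) ds`. -/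
theorem stmt9 (lam : ℝ) (hlam : 0 ≤ lam) (t : ℝ) (ht : 0 < t)
    (n : ℕ) (hn : 0 < (n : ℝ) + lam) :
    Real.exp (-((n : ℝ) * t)) =
      ∫ s in Set.Ioi (0 : ℝ),
        Real.exp (-((n : ℝ) * ((n : ℝ) + 2 * lam) * s)) * phiKer lam t s :=
  stmt9_general ht hn.le
end
end

section
/- Let λ > 0 and for t > 0 let φ_t(s) = (t / (2√π)) · s^{−3/2} · exp( −( t/(2√s) − λ√s )^2 ) for s > 0. There exists a constant c > 0, depending only on λ, such that for every 0 < t ≤ 1, ∫_0^∞ s · |∂φ_t(s)/∂s| ds ≤ c. -/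
open MeasureTheory Real Set

noncomputable section

/-!
Put `z = t² / (4s) + λ² s`. Expanding the square gives
`φ_t(s) = t / (2√π) · s^(-3/2) · e^(λt) · e^(-z)`, and logarithmic differentiation gives
`s |φ_t'(s)| ≤ (3/2 + z) |φ_t(s)|`. Since `(3/2 + z) e^(-z) ≤ 4 / (1 + z) ≤ 4 / (1 + t² / (4s))`,
the integrand is at most `8 e^(λt) / √π` times `|t| / (√s (t² + 4s))`, which for `t ≠ 0` is the
derivative of `arctan (2√s / |t|)`. The integral is therefore at most `4 √π e^(λt)`.
-/

open Filter Topology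

section ArctanSqrt

variable {a s : ℝ}

lemma hasDerivAt_arctan_two_mul_sqrt_div (ha : a ≠ 0) (hs : 0 < s) :
    HasDerivAt (fun u ↦ arctan (2 * √u / a)) (a / (√s * (a ^ 2 + 4 * s))) s := by
  refine (((hasDerivAt_sqrt hs.ne').const_mul 2).div_const a).arctan.congr_deriv ?_
  have : √s ≠ 0 := (sqrt_pos.2 hs).ne'
  rw [div_pow, mul_pow, sq_sqrt hs.le]
  field_simp
  ring

lemma tendsto_arctan_two_mul_sqrt_div_atTop (ha : 0 < a) :
    Tendsto (fun u ↦ arctan (2 * √u / a)) atTop (𝓝 (π / 2)) :=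
  (tendsto_nhds_of_tendsto_nhdsWithin tendsto_arctan_atTop).comp
    ((tendsto_sqrt_atTop.const_mul_atTop two_pos).atTop_div_const ha)

lemma div_sqrt_mul_sq_add_nonneg (ha : 0 ≤ a) (hs : 0 ≤ s) :
    0 ≤ a / (√s * (a ^ 2 + 4 * s)) := by
  positivity

lemma integrableOn_div_sqrt_mul_sq_add (ha : 0 < a) :
    IntegrableOn (fun s ↦ a / (√s * (a ^ 2 + 4 * s))) (Ioi 0) :=
  integrableOn_Ioi_deriv_of_nonneg (Continuous.continuousWithinAt (by fun_prop))
    (fun _ hs ↦ hasDerivAt_arctan_two_mul_sqrt_div ha.ne' hs)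
    (fun _ hs ↦ div_sqrt_mul_sq_add_nonneg ha.le (le_of_lt hs))
    (tendsto_arctan_two_mul_sqrt_div_atTop ha)

lemma integral_div_sqrt_mul_sq_add (ha : 0 < a) :
    ∫ s in Ioi 0, a / (√s * (a ^ 2 + 4 * s)) = π / 2 := by
  rw [integral_Ioi_of_hasDerivAt_of_nonneg (Continuous.continuousWithinAt (by fun_prop))
    (fun _ hs ↦ hasDerivAt_arctan_two_mul_sqrt_div ha.ne' hs)
    (fun _ hs ↦ div_sqrt_mul_sq_add_nonneg ha.le (le_of_lt hs))
    (tendsto_arctan_two_mul_sqrt_div_atTop ha)]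
  simp

lemma integrableOn_abs_div_sqrt_mul_sq_add (t : ℝ) :
    IntegrableOn (fun s ↦ |t| / (√s * (t ^ 2 + 4 * s))) (Ioi 0) := by
  rcases eq_or_ne t 0 with rfl | ht
  · simp
  · simpa only [sq_abs] using integrableOn_div_sqrt_mul_sq_add (abs_pos.2 ht)

lemma integral_abs_div_sqrt_mul_sq_add_le (t : ℝ) :
    ∫ s in Ioi 0, |t| / (√s * (t ^ 2 + 4 * s)) ≤ π / 2 := by
  rcases eq_or_ne t 0 with rfl | ht
  · simpa using pi_div_two_pos.le
  · simpa only [sq_abs] using (integral_div_sqrt_mul_sq_add (abs_pos.2 ht)).le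

end ArctanSqrt

lemma three_halves_add_mul_exp_neg_le {z : ℝ} (hz : 0 ≤ z) :
    (3 / 2 + z) * exp (-z) ≤ 4 / (1 + z) := by
  rw [exp_neg, ← div_eq_mul_inv, div_le_div_iff₀ (exp_pos z) (by positivity)]
  calc (3 / 2 + z) * (1 + z) ≤ 4 * (1 + z + z ^ 2 / 2) := by nlinarith
    _ ≤ 4 * exp z := by gcongr; exact quadratic_le_exp_of_nonneg hz

lemma rpow_neg_three_halves {s : ℝ} (hs : 0 < s) : s ^ (-(3 / 2) : ℝ) = (s * √s)⁻¹ := by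
  rw [rpow_neg hs.le, show (3 / 2 : ℝ) = 1 + 1 / 2 by norm_num, rpow_add hs, rpow_one,
    ← sqrt_eq_rpow]

section Kernel

variable (lam t : ℝ) {s : ℝ}

lemma neg_sq_div_sqrt_sub_mul_sqrt (hs : 0 < s) :
    -(t / (2 * √s) - lam * √s) ^ 2 = lam * t - (t ^ 2 / (4 * s) + lam ^ 2 * s) := by
  have hsqrt : √s ≠ 0 := (sqrt_pos.2 hs).ne'
  have hcross : t / (2 * √s) * (lam * √s) = lam * t / 2 := by field_simp
  rw [sub_sq, mul_assoc 2, hcross, div_pow, mul_pow, mul_pow, sq_sqrt hs.le]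
  ring

lemma phiKer_eq (hs : 0 < s) :
    phiKer lam t s = t / (2 * √π) * s ^ (-(3 / 2) : ℝ) *
      exp (lam * t - (t ^ 2 / (4 * s) + lam ^ 2 * s)) := by
  rw [phiKer, neg_sq_div_sqrt_sub_mul_sqrt lam t hs]

lemma abs_phiKer (hs : 0 < s) :
    |phiKer lam t s| = |t| / (2 * √π) * (s * √s)⁻¹ *
      (exp (lam * t) * exp (-(t ^ 2 / (4 * s) + lam ^ 2 * s))) := by
  have hpos : 0 < (s * √s)⁻¹ := by positivity
  rw [phiKer_eq lam t hs, rpow_neg_three_halves hs, abs_mul, abs_mul, abs_div, abs_exp,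
    abs_of_pos hpos, abs_of_pos (by positivity : 0 < 2 * √π), sub_eq_add_neg, exp_add]

lemma hasDerivAt_phiKer (hs : 0 < s) :
    HasDerivAt (phiKer lam t)
      (phiKer lam t s * (-(3 / 2) / s + t ^ 2 / (4 * s ^ 2) - lam ^ 2)) s := by
  have hpow := (hasDerivAt_rpow_const (p := -(3 / 2)) (.inl hs.ne')).const_mul (t / (2 * √π))
  have hinv : HasDerivAt (fun u ↦ t ^ 2 / (4 * u)) (-(t ^ 2 / (4 * s ^ 2))) s := by
    convert! (hasDerivAt_inv hs.ne').const_mul (t ^ 2 / 4) using 1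
    · ext u; ring
    · ring
  have hexp := ((hinv.fun_add ((hasDerivAt_id' s).const_mul (lam ^ 2))).const_sub (lam * t)).exp
  refine ((hpow.fun_mul hexp).congr_of_eventuallyEq ?_).congr_deriv ?_
  · filter_upwards [lt_mem_nhds hs] with u hu using phiKer_eq lam t hu
  · rw [phiKer_eq lam t hs, rpow_sub_one hs.ne']
    ring

lemma mul_abs_deriv_phiKer_le_mul_abs (hs : 0 < s) :
    s * |deriv (phiKer lam t) s| ≤
      (3 / 2 + (t ^ 2 / (4 * s) + lam ^ 2 * s)) * |phiKer lam t s| := by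
  have hx : 0 ≤ t ^ 2 / (4 * s) := by positivity
  have hy : 0 ≤ lam ^ 2 * s := by positivity
  have hlog : s * deriv (phiKer lam t) s =
      (-(3 / 2) + t ^ 2 / (4 * s) - lam ^ 2 * s) * phiKer lam t s := by
    rw [(hasDerivAt_phiKer lam t hs).deriv]
    field_simp
  calc s * |deriv (phiKer lam t) s|
      = |s * deriv (phiKer lam t) s| := by rw [abs_mul, abs_of_pos hs]
    _ = |-(3 / 2) + t ^ 2 / (4 * s) - lam ^ 2 * s| * |phiKer lam t s| := by rw [hlog, abs_mul]
    _ ≤ (3 / 2 + (t ^ 2 / (4 * s) + lam ^ 2 * s)) * |phiKer lam t s| := by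
        gcongr
        exact abs_le.2 ⟨by linarith, by linarith⟩

lemma mul_abs_deriv_phiKer_le (hs : 0 < s) :
    s * |deriv (phiKer lam t) s| ≤
      8 * exp (lam * t) / √π * (|t| / (√s * (t ^ 2 + 4 * s))) := by
  set z := t ^ 2 / (4 * s) + lam ^ 2 * s with hz
  have hz_ge : t ^ 2 / (4 * s) ≤ z := le_add_of_nonneg_right (by positivity)
  calc s * |deriv (phiKer lam t) s|
      ≤ (3 / 2 + z) * |phiKer lam t s| := mul_abs_deriv_phiKer_le_mul_abs lam t hs
    _ = |t| / (2 * √π) * (s * √s)⁻¹ * exp (lam * t) * ((3 / 2 + z) * exp (-z)) := by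
        rw [abs_phiKer lam t hs, ← hz]
        ring
    _ ≤ |t| / (2 * √π) * (s * √s)⁻¹ * exp (lam * t) * (4 / (1 + z)) := by
        gcongr
        exact three_halves_add_mul_exp_neg_le (by positivity)
    _ ≤ |t| / (2 * √π) * (s * √s)⁻¹ * exp (lam * t) * (4 / (1 + t ^ 2 / (4 * s))) := by
        gcongr
    _ = 8 * exp (lam * t) / √π * (|t| / (√s * (t ^ 2 + 4 * s))) := by
        field_simp
        ring

lemma integrableOn_mul_abs_deriv_phiKer :
    IntegrableOn (fun s ↦ s * |deriv (phiKer lam t) s|) (Ioi 0) := by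
  refine ((integrableOn_abs_div_sqrt_mul_sq_add t).const_mul (8 * exp (lam * t) / √π)).mono'
    (measurable_id.mul (measurable_deriv _).abs).aestronglyMeasurable ?_
  filter_upwards [ae_restrict_mem measurableSet_Ioi] with s hs
  rw [norm_of_nonneg (mul_nonneg (le_of_lt hs) (abs_nonneg _))]
  exact mul_abs_deriv_phiKer_le lam t hs

end Kernel

theorem stmt10_general (lam t : ℝ) :
    IntegrableOn (fun s ↦ s * |deriv (phiKer lam t) s|) (Ioi 0) ∧
      ∫ s in Ioi 0, s * |deriv (phiKer lam t) s| ≤ 4 * √π * exp (lam * t) := by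
  refine ⟨integrableOn_mul_abs_deriv_phiKer lam t, ?_⟩
  calc ∫ s in Ioi 0, s * |deriv (phiKer lam t) s|
      ≤ ∫ s in Ioi 0, 8 * exp (lam * t) / √π * (|t| / (√s * (t ^ 2 + 4 * s))) :=
        setIntegral_mono_on (integrableOn_mul_abs_deriv_phiKer lam t)
          ((integrableOn_abs_div_sqrt_mul_sq_add t).const_mul _) measurableSet_Ioi
          fun _ hs ↦ mul_abs_deriv_phiKer_le lam t hs
    _ ≤ 8 * exp (lam * t) / √π * (π / 2) := by
        rw [integral_const_mul]
        gcongr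
        exact integral_abs_div_sqrt_mul_sq_add_le t
    _ = 4 * (π / √π) * exp (lam * t) := by ring
    _ = 4 * √π * exp (lam * t) := by rw [div_sqrt]

/-- `∫₀^∞ s |φ_t'(s)| ds ≤ c` uniformly in `0 < t ≤ 1`. -/
theorem stmt10 (lam : ℝ) (hlam : 0 < lam) :
    ∃ c : ℝ, 0 < c ∧ ∀ t : ℝ, 0 < t → t ≤ 1 →
      (∫ s in Set.Ioi (0 : ℝ), s * |deriv (phiKer lam t) s|) ≤ c := by
  refine ⟨4 * √π * exp lam, by positivity, fun t _ ht ↦ (stmt10_general lam t).2.trans ?_⟩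
  gcongr
  exact mul_le_of_le_one_right hlam.le ht
end
end
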